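/- For a sequence (a_n)_{n≥1} of integers, the following conditions are equivalent: (a) (a_n) is a Dold sequence; (b) there exist realizable sequences (x_n)_{n≥1} and (y_n)_{n≥1} with a_n = x_n − y_n for all n ≥ 1; (c) for every prime p and all integers n, ℓ ≥ 1, a_{n·p^ℓ} ≡ a_{n·p^{ℓ−1}} modulo p^ℓ. -/

import Mathlib

/-- A sequence `(a n)` of integers (indexed by `n ≥ 1`) is a Dold sequence if for every
`n ≥ 1`, `n` divides `∑_{d ∣ n} μ(n/d) · a d`. -/
def DoldSeq (a : ℕ → ℤ) : Prop :=
  ∀ n : ℕ, 1 ≤ n →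
    (n : ℤ) ∣ ∑ d ∈ n.divisors, ArithmeticFunction.moebius (n / d) * a d

/-- A sequence of non-negative integers is realizable if for every `n ≥ 1` the Möbius
sum `∑_{d ∣ n} μ(n/d)·a d` is non-negative and divisible by `n`. -/
def Realizable (x : ℕ → ℕ) : Prop :=
  ∀ n : ℕ, 1 ≤ n →
    0 ≤ (∑ d ∈ n.divisors, ArithmeticFunction.moebius (n / d) * (x d : ℤ)) ∧
    (n : ℤ) ∣ ∑ d ∈ n.divisors, ArithmeticFunction.moebius (n / d) * (x d : ℤ)

/-!
Write `b` for the Möbius transform of `a`, so that `a n = ∑_{d ∣ n} b d`. In the difference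
`a (n * p ^ (k + 1)) - a (n * p ^ k)` only the terms `b d` with `d ∣ n * p ^ (k + 1)` and
`d ∤ n * p ^ k` survive, and all those `d` are divisible by `p ^ (k + 1)`. This yields the
congruences if `d ∣ b d` for every `d`. Conversely, the term of largest index is
`b (n * p ^ (k + 1))`, so the congruences recover the divisibility by strong induction, one prime
power at a time. Finally, splitting `b` into its positive and negative parts and summing each over
divisors writes a Dold sequence as a difference of realizable ones.
-/

open Finset

section Divisibility

theorem pow_succ_dvd_of_dvd_mul_pow_succ {M : Type*} [CommMonoidWithZero M]
    [IsCancelMulZero M] {p d n : M} {k : ℕ} (hp : Prime p) (hd : d ∣ n * p ^ (k + 1))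
    (hd' : ¬d ∣ n * p ^ k) : p ^ (k + 1) ∣ d := by
  obtain ⟨e, he⟩ := hd
  have hpe : ¬p ∣ e := by
    rintro ⟨f, rfl⟩
    refine hd' ⟨f, mul_left_cancel₀ hp.ne_zero ?_⟩
    calc p * (n * p ^ k) = n * p ^ (k + 1) := by rw [pow_succ', mul_left_comm]
      _ = p * (d * f) := by rw [he, mul_left_comm]
  exact hp.pow_dvd_of_dvd_mul_right _ hpe (he ▸ dvd_mul_left _ _)

theorem pow_succ_dvd_of_mem_divisors_sdiff {p n k d : ℕ} (hp : p.Prime)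
    (hd : d ∈ (n * p ^ (k + 1)).divisors \ (n * p ^ k).divisors) : p ^ (k + 1) ∣ d := by
  obtain ⟨⟨hdvd, hne⟩, hndvd⟩ : (d ∣ n * p ^ (k + 1) ∧ n * p ^ (k + 1) ≠ 0) ∧
      (d ∣ n * p ^ k → n * p ^ k = 0) := by
    simpa only [mem_sdiff, Nat.mem_divisors, not_and, not_not] using hd
  have hne' : n * p ^ k ≠ 0 := mul_ne_zero (left_ne_zero_of_mul hne) (pow_ne_zero _ hp.ne_zero)
  exact pow_succ_dvd_of_dvd_mul_pow_succ hp.prime hdvd (mt hndvd hne')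

theorem natCast_dvd_iff_forall_prime_pow_dvd {n : ℕ} {z : ℤ} :
    (n : ℤ) ∣ z ↔ ∀ p k : ℕ, p.Prime → p ^ k ∣ n → (p : ℤ) ^ k ∣ z := by
  simp only [← Nat.cast_pow, Int.natCast_dvd, ← Nat.dvd_iff_prime_pow_dvd_dvd]

theorem dvd_toNat_of_natCast_dvd {n : ℕ} {z : ℤ} (h : (n : ℤ) ∣ z) : n ∣ z.toNat := by
  rcases le_total 0 z with hz | hz
  · rwa [← Int.natCast_dvd_natCast, Int.toNat_of_nonneg hz]
  · simp [Int.toNat_of_nonpos hz]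

end Divisibility

section DivisorSums

theorem sum_divisors_mul_pow_succ_sub {M : Type*} [AddCommGroup M] (b : ℕ → M) {p n : ℕ}
    (hp : p ≠ 0) (hn : n ≠ 0) (k : ℕ) :
    ∑ d ∈ (n * p ^ (k + 1)).divisors, b d - ∑ d ∈ (n * p ^ k).divisors, b d =
      ∑ d ∈ (n * p ^ (k + 1)).divisors \ (n * p ^ k).divisors, b d := by
  refine (sum_sdiff_eq_sub (Nat.divisors_subset_of_dvd ?_ ?_)).symm
  · exact mul_ne_zero hn (pow_ne_zero _ hp)
  · exact mul_dvd_mul_left n (pow_dvd_pow p k.le_succ)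

variable {R : Type*} [CommRing R] {p : ℕ} {b : ℕ → R}

theorem pow_succ_dvd_sum_divisors_sub (hp : p.Prime)
    (hb : ∀ m k : ℕ, m ≠ 0 → p ^ k ∣ m → (p : R) ^ k ∣ b m) {n : ℕ} (hn : n ≠ 0) (k : ℕ) :
    (p : R) ^ (k + 1) ∣
      ∑ d ∈ (n * p ^ (k + 1)).divisors, b d - ∑ d ∈ (n * p ^ k).divisors, b d := by
  rw [sum_divisors_mul_pow_succ_sub b hp.ne_zero hn]
  refine dvd_sum fun d hd ↦ hb d (k + 1) ?_ (pow_succ_dvd_of_mem_divisors_sdiff hp hd)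
  exact (Nat.pos_of_mem_divisors (mem_sdiff.1 hd).1).ne'

theorem pow_dvd_of_pow_succ_dvd_sum_divisors_sub (hp : p.Prime)
    (h : ∀ n k : ℕ, n ≠ 0 → (p : R) ^ (k + 1) ∣
      ∑ d ∈ (n * p ^ (k + 1)).divisors, b d - ∑ d ∈ (n * p ^ k).divisors, b d)
    {m k : ℕ} (hm : m ≠ 0) (hpm : p ^ k ∣ m) : (p : R) ^ k ∣ b m := by
  induction m using Nat.strong_induction_on with
  | _ m ih =>
    obtain _ | k := k
    · simp
    obtain ⟨n, rfl⟩ := hpm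
    rw [mul_comm] at hm ih ⊢
    have hn : n ≠ 0 := left_ne_zero_of_mul hm
    set D := (n * p ^ (k + 1)).divisors \ (n * p ^ k).divisors with hD
    have htop : n * p ^ (k + 1) ∈ D := by
      have hlt : n * p ^ k < n * p ^ (k + 1) :=
        Nat.mul_lt_mul_of_pos_left (Nat.pow_lt_pow_succ hp.one_lt) (Nat.pos_of_ne_zero hn)
      exact mem_sdiff.2 ⟨Nat.mem_divisors_self _ hm, fun hd ↦ (Nat.divisor_le hd).not_gt hlt⟩
    have hrest : (p : R) ^ (k + 1) ∣ ∑ d ∈ D.erase (n * p ^ (k + 1)), b d := by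
      refine dvd_sum fun d hd ↦ ?_
      obtain ⟨hne, hdD⟩ := mem_erase.1 hd
      have hdiv : d ∈ (n * p ^ (k + 1)).divisors := (mem_sdiff.1 hdD).1
      exact ih d ((Nat.divisor_le hdiv).lt_of_ne hne) (Nat.pos_of_mem_divisors hdiv).ne'
        (pow_succ_dvd_of_mem_divisors_sdiff hp hdD)
    have hsum := h n k hn
    rw [sum_divisors_mul_pow_succ_sub b hp.ne_zero hn, ← hD, ← add_sum_erase D b htop] at hsum
    exact (dvd_add_left hrest).1 hsum

end DivisorSums

section MoebiusTransform

variable {M : Type*} [AddCommGroup M]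

/-- The Möbius transform `n ↦ ∑_{d ∣ n} μ(n/d) a(d)` of a sequence in an additive commutative group,
that is, the inverse of summation over divisors. Its value at `0` is the empty sum `0`. -/
def moebiusTransform (a : ℕ → M) (n : ℕ) : M :=
  ∑ d ∈ n.divisors, ArithmeticFunction.moebius (n / d) • a d

theorem sum_divisors_eq_iff_moebiusTransform_eq {a b : ℕ → M} :
    (∀ n > 0, ∑ d ∈ n.divisors, b d = a n) ↔ ∀ n > 0, moebiusTransform a n = b n := by
  simp only [ArithmeticFunction.sum_eq_iff_sum_smul_moebius_eq, moebiusTransform,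
    Nat.sum_divisorsAntidiagonal' fun x y ↦ ArithmeticFunction.moebius x • a y]

theorem sum_divisors_moebiusTransform (a : ℕ → M) {n : ℕ} (hn : n ≠ 0) :
    ∑ d ∈ n.divisors, moebiusTransform a d = a n :=
  sum_divisors_eq_iff_moebiusTransform_eq.2 (fun _ _ ↦ rfl) n (Nat.pos_of_ne_zero hn)

theorem moebiusTransform_sum_divisors (b : ℕ → M) {n : ℕ} (hn : n ≠ 0) :
    moebiusTransform (fun m ↦ ∑ d ∈ m.divisors, b d) n = b n :=
  sum_divisors_eq_iff_moebiusTransform_eq.1 (fun _ _ ↦ rfl) n (Nat.pos_of_ne_zero hn)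

theorem moebiusTransform_sub (a b : ℕ → M) (n : ℕ) :
    moebiusTransform (a - b) n = moebiusTransform a n - moebiusTransform b n := by
  simp only [moebiusTransform, Pi.sub_apply, smul_sub, sum_sub_distrib]

theorem moebiusTransform_congr {a b : ℕ → M} (h : ∀ n ≠ 0, a n = b n) (n : ℕ) :
    moebiusTransform a n = moebiusTransform b n :=
  sum_congr rfl fun d hd ↦ by rw [h d (Nat.pos_of_mem_divisors hd).ne']

theorem forall_pow_dvd_moebiusTransform_iff {R : Type*} [CommRing R] {p : ℕ} (hp : p.Prime)
    (a : ℕ → R) :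
    (∀ n k : ℕ, n ≠ 0 → p ^ k ∣ n → (p : R) ^ k ∣ moebiusTransform a n) ↔
      ∀ n k : ℕ, n ≠ 0 → (p : R) ^ (k + 1) ∣ a (n * p ^ (k + 1)) - a (n * p ^ k) := by
  have hdiff (n k : ℕ) (hn : n ≠ 0) : a (n * p ^ (k + 1)) - a (n * p ^ k) =
      ∑ d ∈ (n * p ^ (k + 1)).divisors, moebiusTransform a d -
        ∑ d ∈ (n * p ^ k).divisors, moebiusTransform a d := by
    have hne (j : ℕ) : n * p ^ j ≠ 0 := mul_ne_zero hn (pow_ne_zero j hp.ne_zero)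
    rw [sum_divisors_moebiusTransform a (hne _), sum_divisors_moebiusTransform a (hne _)]
  constructor
  · intro h n k hn
    rw [hdiff n k hn]
    exact pow_succ_dvd_sum_divisors_sub hp h hn k
  · intro h n k
    exact pow_dvd_of_pow_succ_dvd_sum_divisors_sub hp fun m j hm ↦ hdiff m j hm ▸ h m j hm

end MoebiusTransform

section DoldSequences

variable {a b : ℕ → ℤ}

theorem doldSeq_iff_dvd_moebiusTransform :
    DoldSeq a ↔ ∀ n : ℕ, n ≠ 0 → (n : ℤ) ∣ moebiusTransform a n := by
  simp only [DoldSeq, moebiusTransform, smul_eq_mul, Nat.one_le_iff_ne_zero]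

theorem doldSeq_iff_pow_succ_dvd_sub :
    DoldSeq a ↔ ∀ p : ℕ, p.Prime → ∀ n k : ℕ, n ≠ 0 →
      (p : ℤ) ^ (k + 1) ∣ a (n * p ^ (k + 1)) - a (n * p ^ k) := by
  calc DoldSeq a
    _ ↔ ∀ n : ℕ, n ≠ 0 → ∀ p k : ℕ, p.Prime → p ^ k ∣ n → (p : ℤ) ^ k ∣ moebiusTransform a n := by
      simp only [doldSeq_iff_dvd_moebiusTransform, natCast_dvd_iff_forall_prime_pow_dvd]
    _ ↔ ∀ p : ℕ, p.Prime → ∀ n k : ℕ, n ≠ 0 → p ^ k ∣ n → (p : ℤ) ^ k ∣ moebiusTransform a n :=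
      ⟨fun h p hp n k hn ↦ h n hn p k hp, fun h n hn p k hp ↦ h p hp n k hn⟩
    _ ↔ _ := forall₂_congr fun _ hp ↦ forall_pow_dvd_moebiusTransform_iff hp a

theorem DoldSeq.sub (ha : DoldSeq a) (hb : DoldSeq b) : DoldSeq (a - b) := by
  rw [doldSeq_iff_dvd_moebiusTransform] at *
  intro n hn
  rw [moebiusTransform_sub]
  exact dvd_sub (ha n hn) (hb n hn)

theorem DoldSeq.congr (ha : DoldSeq a) (h : ∀ n ≠ 0, a n = b n) : DoldSeq b := by
  rw [doldSeq_iff_dvd_moebiusTransform] at *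
  simpa only [moebiusTransform_congr h] using ha

theorem Realizable.doldSeq {x : ℕ → ℕ} (hx : Realizable x) : DoldSeq fun n ↦ (x n : ℤ) :=
  fun n hn ↦ (hx n hn).2

theorem realizable_iff_moebiusTransform {x : ℕ → ℕ} :
    Realizable x ↔ ∀ n : ℕ, n ≠ 0 → 0 ≤ moebiusTransform (fun m ↦ (x m : ℤ)) n ∧
      (n : ℤ) ∣ moebiusTransform (fun m ↦ (x m : ℤ)) n := by
  simp only [Realizable, moebiusTransform, smul_eq_mul, Nat.one_le_iff_ne_zero]

theorem realizable_sum_divisors {c : ℕ → ℕ} (hc : ∀ n ≠ 0, n ∣ c n) :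
    Realizable fun n ↦ ∑ d ∈ n.divisors, c d := by
  rw [realizable_iff_moebiusTransform]
  intro n hn
  push_cast
  rw [moebiusTransform_sum_divisors (fun d ↦ (c d : ℤ)) hn]
  exact ⟨Int.natCast_nonneg _, Int.natCast_dvd_natCast.2 (hc n hn)⟩

theorem DoldSeq.exists_realizable_sub (ha : DoldSeq a) :
    ∃ x y : ℕ → ℕ, Realizable x ∧ Realizable y ∧ ∀ n ≠ 0, a n = (x n : ℤ) - (y n : ℤ) := by
  rw [doldSeq_iff_dvd_moebiusTransform] at ha
  refine ⟨fun n ↦ ∑ d ∈ n.divisors, (moebiusTransform a d).toNat,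
    fun n ↦ ∑ d ∈ n.divisors, (-moebiusTransform a d).toNat,
    realizable_sum_divisors fun n hn ↦ dvd_toNat_of_natCast_dvd (ha n hn),
    realizable_sum_divisors fun n hn ↦ dvd_toNat_of_natCast_dvd (ha n hn).neg_right,
    fun n hn ↦ ?_⟩
  simp only [Nat.cast_sum, ← sum_sub_distrib, Int.toNat_sub_toNat_neg]
  exact (sum_divisors_moebiusTransform a hn).symm

theorem doldSeq_iff_exists_realizable_sub :
    DoldSeq a ↔ ∃ x y : ℕ → ℕ, Realizable x ∧ Realizable y ∧
      ∀ n ≠ 0, a n = (x n : ℤ) - (y n : ℤ) := by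
  refine ⟨DoldSeq.exists_realizable_sub, ?_⟩
  rintro ⟨x, y, hx, hy, hxy⟩
  exact (hx.doldSeq.sub hy.doldSeq).congr fun n hn ↦ (hxy n hn).symm

end DoldSequences

/-- For an integer sequence `(a n)`, the following are equivalent: (a) `(a n)` is a
Dold sequence; (b) `(a n)` is a difference of two realizable sequences; (c) for every
prime `p` and all `n, ℓ ≥ 1`, `a (n·p^ℓ) ≡ a (n·p^(ℓ−1))` modulo `p^ℓ`. -/
theorem dold_iff_difference_of_realizable_iff_congruences (a : ℕ → ℤ) :
    (DoldSeq a ↔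
      ∃ x y : ℕ → ℕ, Realizable x ∧ Realizable y ∧
        ∀ n : ℕ, 1 ≤ n → a n = (x n : ℤ) - (y n : ℤ)) ∧
    (DoldSeq a ↔
      ∀ p : ℕ, p.Prime → ∀ n l : ℕ, 1 ≤ n → 1 ≤ l →
        ((p : ℤ) ^ l) ∣ a (n * p ^ l) - a (n * p ^ (l - 1))) := by
  simp only [Nat.one_le_iff_ne_zero]
  refine ⟨doldSeq_iff_exists_realizable_sub, doldSeq_iff_pow_succ_dvd_sub.trans ?_⟩
  constructor
  · intro h p hp n l hn hl
    obtain ⟨k, rfl⟩ := Nat.exists_eq_succ_of_ne_zero hl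
    exact h p hp n k hn
  · exact fun h p hp n k hn ↦ h p hp n (k + 1) hn k.succ_ne_zero
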